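/- Let G be a game graph and let I be a finite union of real intervals with a = inf I > −∞ and a ∈ I; let I_1 be the interval of I containing a. Suppose Eve has a positional strategy σ_> such that from every vertex v ∈ V every play consistent with σ_> satisfies MP(π) ≥ a, and suppose Eve has a strategy σ_< such that from every vertex v ∈ V every play consistent with σ_< satisfies MP(π) ∈ (−∞, a] ∪ I. Then from every vertex Eve has a winning strategy for the interval mean-payoff objective I, i.e., a strategy such that every consistent play π satisfies MP(π) ∈ I. -/

import Mathlib

/-!
Call `w(π[..k]) - a * k` the excess of the play at time `k`. Eve follows the positional strategy
`f` as long as the excess is negative, and otherwise plays `σ₂` on the part of the history after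
the last time the excess was negative.

Closed walks consistent with `f` have nonnegative excess, since repeating one forever gives a play
consistent with `f`. Removing closed walks from a walk consistent with `f` leaves a path without
repeated vertices, so the excess drops by at most a constant while Eve follows `f`. Hence the
excess is bounded below along every play, and the mean-payoff is at least `a`. If the excess is
negative infinitely often, the mean-payoff is also at most `a`; otherwise some tail of the play is
consistent with `σ₂`, and the mean-payoff does not depend on finite prefixes.
-/

open Filter

/-- A game graph: vertex set `V`, Eve's vertices `Eve`, edge relation `E` (every vertex
has a successor), integer weight function `w`, and initial vertex `init`. -/
structure GameGraph (V : Type) where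
  Eve : Set V
  E : V → V → Prop
  w : V → V → ℤ
  init : V
  succ : ∀ v, ∃ u, E v u

namespace GameGraph

variable {V : Type}

/-- `π` is a play starting at vertex `v`. -/
def IsPlayFrom (G : GameGraph V) (v : V) (π : ℕ → V) : Prop :=
  π 0 = v ∧ ∀ i, G.E (π i) (π (i + 1))

/-- `π` is a play (from the initial vertex). -/
def IsPlay (G : GameGraph V) (π : ℕ → V) : Prop :=
  G.IsPlayFrom G.init π

/-- The prefix `π 0, …, π i` of a play, as a list. -/
def prefixList (π : ℕ → V) (i : ℕ) : List V :=
  List.ofFn (fun j : Fin (i + 1) => π j)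

/-- A (history-based) strategy for Eve is legal if it always proposes a successor
of the current (Eve) vertex. -/
def EveLegal (G : GameGraph V) (σ : List V → V) : Prop :=
  ∀ (l : List V) (v : V), v ∈ G.Eve → G.E v (σ (l ++ [v]))

/-- A (history-based) strategy for Adam is legal if it always proposes a successor
of the current (Adam) vertex. -/
def AdamLegal (G : GameGraph V) (σ : List V → V) : Prop :=
  ∀ (l : List V) (v : V), v ∉ G.Eve → G.E v (σ (l ++ [v]))

/-- The play `π` is consistent with Eve's strategy `σ`. -/
def ConsEve (G : GameGraph V) (σ : List V → V) (π : ℕ → V) : Prop :=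
  ∀ i, π i ∈ G.Eve → π (i + 1) = σ (prefixList π i)

/-- The play `π` is consistent with Adam's strategy `σ`. -/
def ConsAdam (G : GameGraph V) (σ : List V → V) (π : ℕ → V) : Prop :=
  ∀ i, π i ∉ G.Eve → π (i + 1) = σ (prefixList π i)

/-- Eve has a winning strategy for the objective `Win`. -/
def EveWins (G : GameGraph V) (Win : (ℕ → V) → Prop) : Prop :=
  ∃ σ : List V → V, G.EveLegal σ ∧ ∀ π, G.IsPlay π → G.ConsEve σ π → Win π

/-- Adam has a winning strategy: he can ensure the objective `Win` of Eve fails. -/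
def AdamWins (G : GameGraph V) (Win : (ℕ → V) → Prop) : Prop :=
  ∃ σ : List V → V, G.AdamLegal σ ∧ ∀ π, G.IsPlay π → G.ConsAdam σ π → ¬ Win π

/-- Consistency with a positional Eve strategy. -/
def ConsEvePos (G : GameGraph V) (f : V → V) (π : ℕ → V) : Prop :=
  ∀ i, π i ∈ G.Eve → π (i + 1) = f (π i)

/-- Consistency with a positional Adam strategy. -/
def ConsAdamPos (G : GameGraph V) (f : V → V) (π : ℕ → V) : Prop :=
  ∀ i, π i ∉ G.Eve → π (i + 1) = f (π i)

/-- Eve has a positional (memoryless) winning strategy. -/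
def EveWinsPos (G : GameGraph V) (Win : (ℕ → V) → Prop) : Prop :=
  ∃ f : V → V, (∀ v ∈ G.Eve, G.E v (f v)) ∧
    ∀ π, G.IsPlay π → G.ConsEvePos f π → Win π

/-- Adam has a positional (memoryless) winning strategy. -/
def AdamWinsPos (G : GameGraph V) (Win : (ℕ → V) → Prop) : Prop :=
  ∃ f : V → V, (∀ v, v ∉ G.Eve → G.E v (f v)) ∧
    ∀ π, G.IsPlay π → G.ConsAdamPos f π → ¬ Win π

/-- The run of the memory structure `(δ, m)` of a finite-state machine while
reading the play `π`: after `i` steps it has read `π 0, …, π (i-1)`. -/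
def memRun {M : Type} (δ : M → V → M) (m : M) (π : ℕ → V) : ℕ → M
  | 0 => m
  | i + 1 => δ (memRun δ m π i) (π i)

/-- Consistency of a play with the finite-memory strategy given by the machine
`(m0, δ, o)`: at step `i`, the machine has memory `memRun δ m0 π i` (having read
`π 0, …, π (i-1)`) and outputs the move `o (memRun δ m0 π i) (π i)`. -/
def ConsEveFM (G : GameGraph V) {M : Type} (m0 : M) (δ : M → V → M)
    (o : M → V → V) (π : ℕ → V) : Prop :=
  ∀ i, π i ∈ G.Eve → π (i + 1) = o (memRun δ m0 π i) (π i)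

/-- Eve has a finite-memory winning strategy, i.e. one computed by a
finite-state machine. -/
def EveWinsFM (G : GameGraph V) (Win : (ℕ → V) → Prop) : Prop :=
  ∃ (M : Type) (_ : Fintype M) (m0 : M) (δ : M → V → M) (o : M → V → V),
    (∀ m, ∀ v ∈ G.Eve, G.E v (o m v)) ∧
    ∀ π, G.IsPlay π → G.ConsEveFM m0 δ o π → Win π

/-- The total weight `w(π[..k])` of the length-`k` prefix of a play. -/
def partialSum (G : GameGraph V) (π : ℕ → V) (k : ℕ) : ℤ :=
  ∑ i ∈ Finset.range k, G.w (π i) (π (i + 1))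

/-- The (liminf) mean-payoff of a play. -/
noncomputable def MP (G : GameGraph V) (π : ℕ → V) : ℝ :=
  liminf (fun k => (G.partialSum π k : ℝ) / (k : ℝ)) atTop

/-- The liminf payoff of a play, in the extended reals. -/
noncomputable def liminfPayoff (G : GameGraph V) (π : ℕ → V) : EReal :=
  liminf (fun i => ((G.w (π i) (π (i + 1)) : ℝ) : EReal)) atTop

/-- The total-sum payoff of a play, in the extended reals. -/
noncomputable def totalPayoff (G : GameGraph V) (π : ℕ → V) : EReal :=
  liminf (fun k => ((G.partialSum π k : ℝ) : EReal)) atTop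

/-- The discounted sum of a play, with discount factor `lam`. -/
noncomputable def DS (G : GameGraph V) (lam : ℝ) (π : ℕ → V) : ℝ :=
  ∑' i : ℕ, lam ^ i * (G.w (π i) (π (i + 1)) : ℝ)

/-- A play of a (min-)parity game is winning for Eve iff the minimal priority
occurring infinitely often is even. -/
def ParityWin (Ω : V → ℕ) (π : ℕ → V) : Prop :=
  ∃ p, Even p ∧ (∀ N, ∃ k, N ≤ k ∧ Ω (π k) = p) ∧
    ∀ q, (∀ N, ∃ k, N ≤ k ∧ Ω (π k) = q) → p ≤ q

end GameGraph

section Sequences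

lemma exists_forall_not_and_of_eventually_not {P : ℕ → Prop} (h : ∀ᶠ k in atTop, ¬ P k) :
    ∃ N, (∀ k, N ≤ k → ¬ P k) ∧ ∀ M, N = M + 1 → P M := by
  classical
  have hex : ∃ N, ∀ k, N ≤ k → ¬ P k := eventually_atTop.1 h
  refine ⟨Nat.find hex, Nat.find_spec hex, fun M hM => ?_⟩
  by_contra hPM
  refine Nat.find_min hex (m := M) (by omega) fun k hk => ?_
  rcases hk.eq_or_lt with rfl | hlt
  · exact hPM
  · exact Nat.find_spec hex k (by omega)

lemma exists_last_le {P : ℕ → Prop} (h : P 0) (k : ℕ) :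
    ∃ m ≤ k, P m ∧ ∀ i, m < i → i ≤ k → ¬ P i := by
  classical
  exact ⟨Nat.findGreatest P k, Nat.findGreatest_le k, Nat.findGreatest_spec (Nat.zero_le k) h,
    fun _ => Nat.findGreatest_is_greatest⟩

lemma sum_range_mul_mod {M : Type*} [AddCommMonoid M] (g : ℕ → M) (q p : ℕ) :
    ∑ i ∈ Finset.range (q * p), g (i % p) = q • ∑ i ∈ Finset.range p, g i := by
  induction q with
  | zero => simp
  | succ q ih =>
    have hmod : ∀ i ∈ Finset.range p, g ((q * p + i) % p) = g i := fun i hi => by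
      rw [Nat.mul_add_mod', Nat.mod_eq_of_lt (Finset.mem_range.1 hi)]
    rw [Nat.succ_mul, Finset.sum_range_add, ih, Finset.sum_congr rfl hmod, succ_nsmul]

lemma neg_add_le_of_sub_le_on_neg {M : Type*} [AddCommGroup M] [LinearOrder M]
    [IsOrderedAddMonoid M] {s : ℕ → M} {K C : M} (hs : 0 ≤ s 0) (hK : 0 ≤ K)
    (hstep : ∀ k, s k - K ≤ s (k + 1))
    (hneg : ∀ m n, (∀ i < n, s (m + i) < 0) → s m - C ≤ s (m + n)) (k : ℕ) :
    -(K + C) ≤ s k := by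
  have hC : 0 ≤ C := by simpa using hneg 0 0 (by simp)
  obtain ⟨m, hmk, hm, hlast⟩ := exists_last_le (P := fun i => 0 ≤ s i) hs k
  rcases hmk.eq_or_lt with hmk | hmk
  · exact (neg_nonpos.2 (add_nonneg hK hC)).trans (hmk ▸ hm)
  · obtain ⟨n, rfl⟩ := Nat.exists_eq_add_of_le hmk
    have hstretch : s (m + 1) - C ≤ s (m + 1 + n) :=
      hneg _ _ fun i hi => not_le.1 (hlast _ (by omega) (by omega))
    calc -(K + C) = 0 - K - C := by abel
      _ ≤ s m - K - C := by gcongr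
      _ ≤ s (m + 1) - C := by gcongr; exact hstep m
      _ ≤ s (m + 1 + n) := hstretch

lemma liminf_add_eq_of_tendsto {ι R : Type*} [ConditionallyCompleteLinearOrder R]
    [TopologicalSpace R] [OrderTopology R] [DenselyOrdered R] [AddCommGroup R] [AddLeftMono R]
    {l : Filter ι} [l.NeBot] {u v : ι → R} {c : R} (hu : Tendsto u l (nhds c))
    (hle : IsBoundedUnder (· ≤ ·) l v) (hge : IsBoundedUnder (· ≥ ·) l v) :
    liminf (u + v) l = c + liminf v l := by
  have hcob := hle.isCoboundedUnder_ge
  refine le_antisymm ?_ ?_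
  · simpa only [hu.limsup_eq] using
      liminf_add_le hu.isBoundedUnder_ge hu.isBoundedUnder_le hge hcob
  · simpa only [hu.liminf_eq] using
      le_liminf_add hu.isBoundedUnder_ge hu.isBoundedUnder_le hge hcob

lemma liminf_sub_div_eq {s : ℕ → ℝ} (hs : IsBoundedUnder (· ≤ ·) atTop fun k : ℕ => |s k / k|)
    (N : ℕ) :
    liminf (fun k : ℕ => (s (k + N) - s N) / k) atTop = liminf (fun k : ℕ => s k / k) atTop := by
  set A : ℕ → ℝ := fun k => s (k + N) / (k + N : ℕ)
  have hA : IsBoundedUnder (· ≤ ·) atTop fun k => |A k| :=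
    (tendsto_add_atTop_nat N).isBoundedUnder_comp hs
  have herr : Tendsto (fun k : ℕ => A k * (N / k) - s N / k) atTop (nhds 0) := by
    simpa using (isBoundedUnder_le_mul_tendsto_zero hA
      (tendsto_const_div_atTop_nhds_zero_nat (N : ℝ))).sub
        (tendsto_const_div_atTop_nhds_zero_nat (s N))
  have hsplit : ∀ᶠ k : ℕ in atTop,
      (s (k + N) - s N) / k = ((fun k : ℕ => A k * (N / k) - s N / k) + A) k := by
    filter_upwards [eventually_gt_atTop 0] with k hk
    have hk' : (k : ℝ) ≠ 0 := by positivity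
    have hkN : (k : ℝ) + N ≠ 0 := by positivity
    simp only [Pi.add_apply, A, Nat.cast_add]
    field_simp
    ring
  obtain ⟨hle, hge⟩ := isBoundedUnder_le_abs.1 hA
  rw [liminf_congr hsplit, liminf_add_eq_of_tendsto herr hle hge, zero_add]
  exact liminf_nat_add (fun k : ℕ => s k / k) N

end Sequences

section Walks

variable {V : Type*}

/-- The sequence that repeats the first `p` vertices of `π` forever; it follows the edges of `π`
when `π p = π 0`. -/
def repeatWalk (π : ℕ → V) (p : ℕ) : ℕ → V :=
  fun k => π (k % p)

lemma repeatWalk_succ {π : ℕ → V} {p : ℕ} (hp : 0 < p) (hclosed : π p = π 0) (k : ℕ) :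
    repeatWalk π p (k + 1) = π (k % p + 1) := by
  rw [repeatWalk, ← Nat.mod_add_mod]
  rcases (show k % p + 1 ≤ p from Nat.mod_lt k hp).eq_or_lt with h | h
  · rw [h, Nat.mod_self, hclosed]
  · rw [Nat.mod_eq_of_lt h]

lemma neg_card_nsmul_le_sum_of_closed_nonneg {M : Type*} [AddCommGroup M] [PartialOrder M]
    [IsOrderedAddMonoid M] {R : V → V → Prop} {c : V → V → M} {K : M} (hK : 0 ≤ K)
    (hc : ∀ u v, R u v → -K ≤ c u v)
    (hclosed : ∀ (π : ℕ → V) (p : ℕ), π p = π 0 → (∀ i < p, R (π i) (π (i + 1))) →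
      0 ≤ ∑ i ∈ Finset.range p, c (π i) (π (i + 1)))
    (A : Finset V) (π : ℕ → V) (n : ℕ) (hA : ∀ i ≤ n, π i ∈ A)
    (hR : ∀ i < n, R (π i) (π (i + 1))) :
    -(A.card • K) ≤ ∑ i ∈ Finset.range n, c (π i) (π (i + 1)) := by
  classical
  induction A using Finset.strongInduction generalizing π n with
  | H A ih =>
    -- The walk up to the last visit `j` to its first vertex is closed; the rest avoids that vertex.
    obtain ⟨j, hjn, hj, hlast⟩ := exists_last_le (P := fun i => π i = π 0) rfl n
    have hclosed_j : 0 ≤ ∑ i ∈ Finset.range j, c (π i) (π (i + 1)) :=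
      hclosed π j hj fun i hi => hR i (by omega)
    rcases hjn.eq_or_lt with hjn | hjn
    · exact (neg_nonpos.2 (nsmul_nonneg hK _)).trans (hjn ▸ hclosed_j)
    · obtain ⟨m, hm⟩ := Nat.exists_eq_add_of_le (Nat.succ_le_of_lt hjn)
      have h0 : π 0 ∈ A := hA 0 (Nat.zero_le n)
      have hrest := ih (A.erase (π 0)) (Finset.erase_ssubset h0) (fun i => π (j + 1 + i)) m
        (fun i hi => Finset.mem_erase.2 ⟨hlast _ (by omega) (by omega), hA _ (by omega)⟩)
        (fun i hi => hR (j + 1 + i) (by omega))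
      calc -(A.card • K) = 0 + -K + -((A.erase (π 0)).card • K) := by
            rw [← Finset.card_erase_add_one h0, succ_nsmul]; abel
        _ ≤ ∑ i ∈ Finset.range j, c (π i) (π (i + 1)) + c (π j) (π (j + 1))
            + ∑ i ∈ Finset.range m, c (π (j + 1 + i)) (π (j + 1 + (i + 1))) := by
          gcongr
          exact hc _ _ (hR j hjn)
        _ = ∑ i ∈ Finset.range n, c (π i) (π (i + 1)) := by
          rw [hm, Finset.sum_range_add, Finset.sum_range_succ]
          rfl

end Walks

namespace GameGraph

variable {V : Type}

section Excess

variable (G : GameGraph V)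

/-- The weight of the length-`k` prefix of `π` after subtracting `a` from the weight of every
edge; its sign compares the average weight of the prefix with `a`. -/
noncomputable def excess (a : ℝ) (π : ℕ → V) (k : ℕ) : ℝ :=
  ∑ i ∈ Finset.range k, ((G.w (π i) (π (i + 1)) : ℝ) - a)

lemma excess_eq (a : ℝ) (π : ℕ → V) (k : ℕ) : G.excess a π k = G.partialSum π k - a * k := by
  simp [excess, partialSum, Finset.sum_sub_distrib, mul_comm]

lemma excess_zero (a : ℝ) (π : ℕ → V) : G.excess a π 0 = 0 := by
  simp [excess]

lemma excess_succ (a : ℝ) (π : ℕ → V) (k : ℕ) :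
    G.excess a π (k + 1) = G.excess a π k + ((G.w (π k) (π (k + 1)) : ℝ) - a) :=
  Finset.sum_range_succ _ _

lemma excess_add (a : ℝ) (π : ℕ → V) (m n : ℕ) :
    G.excess a π (m + n) = G.excess a π m + G.excess a (fun j => π (m + j)) n :=
  Finset.sum_range_add _ _ _

lemma excess_repeatWalk (a : ℝ) {π : ℕ → V} {p : ℕ} (hp : 0 < p) (hclosed : π p = π 0) (q : ℕ) :
    G.excess a (repeatWalk π p) (q * p) = q * G.excess a π p := by
  simp only [excess, repeatWalk_succ hp hclosed]
  simp only [repeatWalk]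
  rw [sum_range_mul_mod (fun i => (G.w (π i) (π (i + 1)) : ℝ) - a), nsmul_eq_mul]

lemma partialSum_add (π : ℕ → V) (m n : ℕ) :
    G.partialSum π (m + n) = G.partialSum π m + G.partialSum (fun j => π (m + j)) n :=
  Finset.sum_range_add _ _ _

end Excess

section MeanPayoff

variable {G : GameGraph V} {K : ℝ}

lemma exists_abs_w_le [Finite V] (G : GameGraph V) : ∃ K : ℝ, ∀ u v, |(G.w u v : ℝ)| ≤ K := by
  obtain ⟨K, hK⟩ := (Set.finite_range fun p : V × V => |(G.w p.1 p.2 : ℝ)|).bddAbove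
  exact ⟨K, fun u v => hK ⟨(u, v), rfl⟩⟩

lemma abs_partialSum_div_le (hK : ∀ u v, |(G.w u v : ℝ)| ≤ K) (π : ℕ → V) (k : ℕ) :
    |(G.partialSum π k : ℝ) / k| ≤ K := by
  rw [abs_div, Nat.abs_cast]
  refine div_le_of_le_mul₀ k.cast_nonneg ((abs_nonneg _).trans (hK G.init G.init)) ?_
  calc |(G.partialSum π k : ℝ)| ≤ ∑ i ∈ Finset.range k, |(G.w (π i) (π (i + 1)) : ℝ)| := by
        rw [partialSum, Int.cast_sum]
        exact Finset.abs_sum_le_sum_abs _ _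
    _ ≤ k • K := by
        simpa using Finset.sum_le_card_nsmul (Finset.range k) _ K fun i _ => hK _ _
    _ = K * k := by rw [nsmul_eq_mul, mul_comm]

lemma isBoundedUnder_abs_partialSum_div (hK : ∀ u v, |(G.w u v : ℝ)| ≤ K) (π : ℕ → V) :
    IsBoundedUnder (· ≤ ·) atTop fun k : ℕ => |(G.partialSum π k : ℝ) / k| :=
  isBoundedUnder_of ⟨K, abs_partialSum_div_le hK π⟩

lemma neg_add_abs_le_w_sub (hK : ∀ u v, |(G.w u v : ℝ)| ≤ K) (a : ℝ) (u v : V) :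
    -(K + |a|) ≤ (G.w u v : ℝ) - a :=
  neg_le_of_abs_le ((abs_sub _ _).trans (by gcongr; exact hK u v))

lemma MP_add_left (hK : ∀ u v, |(G.w u v : ℝ)| ≤ K) (π : ℕ → V) (N : ℕ) :
    G.MP (fun j => π (N + j)) = G.MP π := by
  rw [MP, MP, ← liminf_sub_div_eq (isBoundedUnder_abs_partialSum_div hK π) N]
  refine liminf_congr (Eventually.of_forall fun k => ?_)
  rw [add_comm k N, partialSum_add, Int.cast_add, add_sub_cancel_left]

lemma MP_le_of_frequently_excess_nonpos (hK : ∀ u v, |(G.w u v : ℝ)| ≤ K) {a : ℝ} {π : ℕ → V}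
    (h : ∃ᶠ k in atTop, G.excess a π k ≤ 0) : G.MP π ≤ a := by
  have hbdd := (isBoundedUnder_le_abs.1 (isBoundedUnder_abs_partialSum_div hK π)).2
  refine liminf_le_of_frequently_le ?_ hbdd
  refine (h.and_eventually (eventually_gt_atTop 0)).mono fun k ⟨hexc, hk⟩ => ?_
  rw [excess_eq, sub_nonpos] at hexc
  rwa [div_le_iff₀ (Nat.cast_pos.2 hk)]

lemma le_MP_of_le_excess (hK : ∀ u v, |(G.w u v : ℝ)| ≤ K) {a C : ℝ} {π : ℕ → V}
    (h : ∀ k, C ≤ G.excess a π k) : a ≤ G.MP π := by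
  have hlim : Tendsto (fun k : ℕ => a + C / k) atTop (nhds a) := by
    simpa using (tendsto_const_div_atTop_nhds_zero_nat C).const_add a
  have hbdd := (isBoundedUnder_le_abs.1 (isBoundedUnder_abs_partialSum_div hK π)).1
  have hle : ∀ᶠ k : ℕ in atTop, a + C / k ≤ (G.partialSum π k : ℝ) / k := by
    filter_upwards [eventually_gt_atTop 0] with k hk
    have hk' : (0 : ℝ) < k := Nat.cast_pos.2 hk
    have hC := h k
    rw [excess_eq] at hC
    rw [le_div_iff₀ hk', add_mul, div_mul_cancel₀ _ hk'.ne']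
    linarith
  calc a = liminf (fun k : ℕ => a + C / k) atTop := hlim.liminf_eq.symm
    _ ≤ G.MP π := liminf_le_liminf hle hlim.isBoundedUnder_ge hbdd.isCoboundedUnder_ge

lemma MP_repeatWalk_le (hK : ∀ u v, |(G.w u v : ℝ)| ≤ K) {π : ℕ → V} {p : ℕ} (hp : 0 < p)
    (hclosed : π p = π 0) : G.MP (repeatWalk π p) ≤ G.partialSum π p / p := by
  have hp' : (p : ℝ) ≠ 0 := by positivity
  refine MP_le_of_frequently_excess_nonpos hK (frequently_atTop.2 fun n => ?_)
  refine ⟨n * p, Nat.le_mul_of_pos_right n hp, ?_⟩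
  rw [excess_repeatWalk G _ hp hclosed, excess_eq, div_mul_cancel₀ _ hp', sub_self, mul_zero]

end MeanPayoff

section PositionalStrategy

variable {G : GameGraph V} {f : V → V} {a K : ℝ}

/-- The edges that a play consistent with the positional strategy `f` may traverse. -/
def ConsEdge (G : GameGraph V) (f : V → V) (u v : V) : Prop :=
  G.E u v ∧ (u ∈ G.Eve → v = f u)

lemma excess_nonneg_of_closed (hK : ∀ u v, |(G.w u v : ℝ)| ≤ K)
    (hf : ∀ v π, G.IsPlayFrom v π → G.ConsEvePos f π → a ≤ G.MP π) {π : ℕ → V} {p : ℕ}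
    (hclosed : π p = π 0) (hπ : ∀ i < p, G.ConsEdge f (π i) (π (i + 1))) :
    0 ≤ G.excess a π p := by
  rcases p.eq_zero_or_pos with rfl | hp
  · exact (G.excess_zero a π).ge
  have hedge (i : ℕ) : G.ConsEdge f (repeatWalk π p i) (repeatWalk π p (i + 1)) := by
    rw [repeatWalk_succ hp hclosed]
    exact hπ _ (Nat.mod_lt i hp)
  have hMP : a ≤ G.partialSum π p / p :=
    (hf _ _ ⟨rfl, fun i => (hedge i).1⟩ fun i => (hedge i).2).trans (MP_repeatWalk_le hK hp hclosed)
  rwa [excess_eq, sub_nonneg, ← le_div_iff₀ (Nat.cast_pos.2 hp)]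

lemma neg_card_mul_le_excess [Fintype V] (hK : ∀ u v, |(G.w u v : ℝ)| ≤ K)
    (hf : ∀ v π, G.IsPlayFrom v π → G.ConsEvePos f π → a ≤ G.MP π) {π : ℕ → V} {n : ℕ}
    (hπ : ∀ i < n, G.ConsEdge f (π i) (π (i + 1))) :
    -(Fintype.card V * (K + |a|)) ≤ G.excess a π n := by
  rw [← nsmul_eq_mul]
  have hK0 : 0 ≤ K := (abs_nonneg _).trans (hK G.init G.init)
  exact neg_card_nsmul_le_sum_of_closed_nonneg (c := fun u v => (G.w u v : ℝ) - a)
    (by positivity) (fun u v _ => neg_add_abs_le_w_sub hK a u v)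
    (fun _ _ => excess_nonneg_of_closed hK hf) Finset.univ π n (fun _ _ => Finset.mem_univ _) hπ

lemma exists_le_excess [Finite V] (hK : ∀ u v, |(G.w u v : ℝ)| ≤ K)
    (hf : ∀ v π, G.IsPlayFrom v π → G.ConsEvePos f π → a ≤ G.MP π) {π : ℕ → V}
    (hπ : ∀ k, G.excess a π k < 0 → G.ConsEdge f (π k) (π (k + 1))) :
    ∃ C, ∀ k, C ≤ G.excess a π k := by
  have := Fintype.ofFinite V
  have hK0 : 0 ≤ K := (abs_nonneg _).trans (hK G.init G.init)
  refine ⟨_, neg_add_le_of_sub_le_on_neg (K := K + |a|) (C := Fintype.card V * (K + |a|))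
    (G.excess_zero a π).ge (by positivity) (fun k => ?_) fun m n hneg => ?_⟩
  · rw [excess_succ, sub_eq_add_neg]
    gcongr
    exact neg_add_abs_le_w_sub hK a _ _
  · rw [excess_add, sub_eq_add_neg]
    gcongr
    exact neg_card_mul_le_excess hK hf fun i hi => hπ (m + i) (hneg i hi)

end PositionalStrategy

section Histories

lemma length_prefixList (π : ℕ → V) (i : ℕ) : (prefixList π i).length = i + 1 :=
  List.length_ofFn

lemma prefixList_eq_append (π : ℕ → V) (i : ℕ) :
    prefixList π i = List.ofFn (fun j : Fin i => π j) ++ [π i] := by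
  rw [prefixList, List.ofFn_succ', List.concat_eq_append]
  rfl

lemma take_prefixList (π : ℕ → V) {k i : ℕ} (hki : k ≤ i) :
    (prefixList π i).take (k + 1) = prefixList π k :=
  List.ext_getElem (by simp [prefixList, hki]) fun _ _ _ => by
    simp [prefixList, -List.ofFn_succ]

lemma drop_prefixList_add (π : ℕ → V) (m i : ℕ) :
    (prefixList π (m + i)).drop m = prefixList (fun j => π (m + j)) i :=
  List.ext_getElem (by simp [prefixList, add_assoc]) fun _ _ _ => by
    simp [prefixList, -List.ofFn_succ]

/-- The history-based strategy that plays the positional strategy `f`; the value on the empty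
history is irrelevant. -/
def positional (G : GameGraph V) (f : V → V) (l : List V) : V :=
  f (l.getLastD G.init)

lemma eveLegal_positional {G : GameGraph V} {f : V → V} (hf : ∀ v ∈ G.Eve, G.E v (f v)) :
    G.EveLegal (G.positional f) := fun l v hv => by
  rw [positional, List.getLastD_concat]
  exact hf v hv

lemma positional_prefixList (G : GameGraph V) (f : V → V) (π : ℕ → V) (i : ℕ) :
    G.positional f (prefixList π i) = f (π i) := by
  rw [positional, prefixList_eq_append, List.getLastD_concat]

/-- The history `l` has negative excess: its average weight is less than `a`. A history of `n`
vertices has `n - 1` edges. -/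
def InDeficit (G : GameGraph V) (a : ℝ) (l : List V) : Prop :=
  ((List.zipWith G.w l l.tail).sum : ℝ) < a * (l.length - 1)

lemma sum_zipWith_prefixList (G : GameGraph V) (π : ℕ → V) (k : ℕ) :
    (List.zipWith G.w (prefixList π k) (prefixList π k).tail).sum = G.partialSum π k := by
  have hw : List.zipWith G.w (prefixList π k) (prefixList π k).tail =
      List.ofFn fun i : Fin k => G.w (π i) (π (i + 1)) :=
    List.ext_getElem (by simp [prefixList]) fun _ _ _ => by
    simp [prefixList, -List.ofFn_succ]
  rw [hw, List.sum_ofFn, partialSum, Finset.sum_range]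

lemma inDeficit_prefixList (G : GameGraph V) (a : ℝ) (π : ℕ → V) (k : ℕ) :
    G.InDeficit a (prefixList π k) ↔ G.excess a π k < 0 := by
  rw [InDeficit, sum_zipWith_prefixList, length_prefixList, excess_eq, sub_neg, Nat.cast_succ,
    add_sub_cancel_right]

end Histories

section Switching

variable {G : GameGraph V} {P : List V → Prop} {σ₁ σ₂ : List V → V}

open Classical in
/-- The time at which the history `l` is restarted: the length of its longest prefix satisfying
`P`, and `0` if there is none. -/
noncomputable def restart (P : List V → Prop) (l : List V) : ℕ :=
  Nat.findGreatest (fun m => P (l.take m)) l.length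

open Classical in
/-- The strategy that plays `σ₁` on histories satisfying `P` and otherwise plays `σ₂` on the part
of the history that starts at the time given by `restart`. -/
noncomputable def switch (P : List V → Prop) (σ₁ σ₂ : List V → V) (l : List V) : V :=
  if P l then σ₁ l else σ₂ (l.drop (restart P l))

lemma restart_lt_length {l : List V} (hl : l ≠ []) (hP : ¬ P l) : restart P l < l.length := by
  classical
  refine (Nat.findGreatest_le _).lt_of_ne fun heq => hP ?_
  have htake : P (l.take l.length) :=
    Nat.findGreatest_of_ne_zero heq (List.length_pos_of_ne_nil hl).ne'
  rwa [List.take_length] at htake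

lemma eveLegal_switch (h₁ : G.EveLegal σ₁) (h₂ : G.EveLegal σ₂) : G.EveLegal (switch P σ₁ σ₂) := by
  intro l v hv
  rw [switch]
  split_ifs with hP
  · exact h₁ l v hv
  · have hlt : restart P (l ++ [v]) < (l ++ [v]).length := restart_lt_length (by simp) hP
    rw [List.length_append, List.length_singleton, Nat.lt_succ_iff] at hlt
    rw [List.drop_append_of_le_length hlt]
    exact h₂ _ v hv

lemma restart_prefixList_add {π : ℕ → V} {N : ℕ} (hN : ∀ k, N ≤ k → ¬ P (prefixList π k))
    (hlast : ∀ M, N = M + 1 → P (prefixList π M)) (i : ℕ) :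
    restart P (prefixList π (N + i)) = N := by
  classical
  rw [restart, length_prefixList, Nat.findGreatest_eq_iff]
  refine ⟨by omega, fun hN0 => ?_, fun n hNn hn => ?_⟩
  · obtain ⟨M, rfl⟩ := Nat.exists_eq_succ_of_ne_zero hN0
    rw [take_prefixList π (by omega)]
    exact hlast M rfl
  · obtain ⟨k, rfl⟩ := Nat.exists_eq_succ_of_ne_zero (Nat.ne_zero_of_lt hNn)
    rw [take_prefixList π (by omega)]
    exact hN k (Nat.lt_succ_iff.1 hNn)

lemma exists_consEve_tail_of_switch {π : ℕ → V} (hπ : G.ConsEve (switch P σ₁ σ₂) π)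
    (hP : ∀ᶠ k in atTop, ¬ P (prefixList π k)) :
    ∃ N, G.ConsEve σ₂ (fun j => π (N + j)) := by
  obtain ⟨N, hN, hlast⟩ := exists_forall_not_and_of_eventually_not hP
  refine ⟨N, fun i hi => ?_⟩
  have hmove := hπ (N + i) hi
  rwa [switch, if_neg (hN _ (Nat.le_add_right N i)), restart_prefixList_add hN hlast,
    drop_prefixList_add] at hmove

lemma consEdge_of_switch {f : V → V} {v : V} {π : ℕ → V} (hplay : G.IsPlayFrom v π)
    (hπ : G.ConsEve (switch P (G.positional f) σ₂) π) {k : ℕ} (hP : P (prefixList π k)) :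
    G.ConsEdge f (π k) (π (k + 1)) := by
  refine ⟨hplay.2 k, fun hk => ?_⟩
  rw [hπ k hk, switch, if_pos hP, positional_prefixList]

end Switching

end GameGraph

theorem stmt5_general {V : Type} [Finite V] (G : GameGraph V) {I : Set ℝ} {a : ℝ} (haI : a ∈ I)
    (f : V → V) (hf : ∀ v ∈ G.Eve, G.E v (f v))
    (hfwin : ∀ v π, G.IsPlayFrom v π → G.ConsEvePos f π → a ≤ G.MP π)
    (σ₂ : List V → V) (hσ₂ : G.EveLegal σ₂)
    (h₂win : ∀ v π, G.IsPlayFrom v π → G.ConsEve σ₂ π → G.MP π ∈ Set.Iic a ∪ I) :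
    ∃ σ : List V → V, G.EveLegal σ ∧
      ∀ v π, G.IsPlayFrom v π → G.ConsEve σ π → G.MP π ∈ I := by
  refine ⟨GameGraph.switch (G.InDeficit a) (G.positional f) σ₂,
    GameGraph.eveLegal_switch (GameGraph.eveLegal_positional hf) hσ₂, fun v π hplay hπ => ?_⟩
  obtain ⟨K, hK⟩ := G.exists_abs_w_le
  obtain ⟨C, hC⟩ := GameGraph.exists_le_excess (π := π) hK hfwin fun k hk =>
    GameGraph.consEdge_of_switch hplay hπ ((G.inDeficit_prefixList a π k).2 hk)
  have hge : a ≤ G.MP π := GameGraph.le_MP_of_le_excess hK hC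
  suffices hmem : G.MP π ∈ Set.Iic a ∪ I from
    hmem.elim (fun hle => le_antisymm hge hle ▸ haI) id
  by_cases hfreq : ∃ᶠ k in atTop, G.InDeficit a (GameGraph.prefixList π k)
  · refine Or.inl (GameGraph.MP_le_of_frequently_excess_nonpos hK (hfreq.mono fun k hk => ?_))
    exact ((G.inDeficit_prefixList a π k).1 hk).le
  · obtain ⟨N, hN⟩ := GameGraph.exists_consEve_tail_of_switch hπ (not_frequently.1 hfreq)
    rw [← GameGraph.MP_add_left hK π N]
    exact h₂win (π N) _ ⟨rfl, fun i => hplay.2 (N + i)⟩ hN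

/-- Let `I` be a finite union of real intervals with
`a = inf I > -∞` and `a ∈ I`. If Eve has a positional strategy `f` guaranteeing
`MP(π) ≥ a` from every vertex, and a strategy `σ₂` guaranteeing
`MP(π) ∈ (-∞, a] ∪ I` from every vertex, then from every vertex she has a strategy
guaranteeing `MP(π) ∈ I`. -/
theorem stmt5 {V : Type} [Fintype V] (G : GameGraph V) (r : ℕ)
    (Is : Fin r → Set ℝ) (hconn : ∀ i, (Is i).OrdConnected)
    (I : Set ℝ) (hI : I = ⋃ i, Is i)
    (hbdd : BddBelow I) (a : ℝ) (ha : a = sInf I) (haI : a ∈ I)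
    (f : V → V) (hf : ∀ v ∈ G.Eve, G.E v (f v))
    (hfwin : ∀ v π, G.IsPlayFrom v π → G.ConsEvePos f π → a ≤ G.MP π)
    (σ₂ : List V → V) (hσ₂ : G.EveLegal σ₂)
    (h₂win : ∀ v π, G.IsPlayFrom v π → G.ConsEve σ₂ π → G.MP π ∈ Set.Iic a ∪ I) :
    ∀ v : V, ∃ σ : List V → V, G.EveLegal σ ∧
      ∀ π, G.IsPlayFrom v π → G.ConsEve σ π → G.MP π ∈ I := by
  obtain ⟨σ, hσ, hwin⟩ := stmt5_general G haI f hf hfwin σ₂ hσ₂ h₂win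
  exact fun v => ⟨σ, hσ, hwin v⟩
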